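/- arXiv:1002.3938 — 7 statements merged into one kernel-verified Lean document; each statement's English description precedes it below -/
import Mathlib

section
/- Let n ≥ 1 and r ≥ 1 be integers and let x, y ∈ [0,∞)^n. If F_{k,r}(x) ≤ F_{k,r}(y) for every integer k with r ≤ k ≤ n·r, then the geometric means satisfy (∏_{i=1}^n x_i)^{1/n} ≤ (∏_{i=1}^n y_i)^{1/n}. -/
open Finset MeasureTheory

/-- `F n r k x`: the sum over all n-tuples κ of nonnegative integers with `∑ i, κ i = k`
and `max_i κ i ≤ r` of `∏ i, x i ^ κ i / (κ i)!`. -/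
noncomputable def F (n r k : ℕ) (x : Fin n → ℝ) : ℝ :=
  ∑ κ ∈ Finset.univ.filter (fun κ : Fin n → Fin (r + 1) => ∑ i, (κ i : ℕ) = k),
    ∏ i, x i ^ (κ i : ℕ) / (Nat.factorial (κ i : ℕ))

/- At the top degree `k = n * r` every exponent must equal its maximum `r`, so `F n r k x` is the
single monomial `(∏ i, x i) ^ r / (r !) ^ n`; comparing two such monomials compares the products. -/

theorem sum_val_eq_card_mul_iff_eq_last {ι : Type*} [Fintype ι] {r : ℕ} {κ : ι → Fin (r + 1)} :
    ∑ i, (κ i : ℕ) = Fintype.card ι * r ↔ κ = fun _ => Fin.last r := by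
  have hle : ∀ i ∈ univ, (κ i : ℕ) ≤ r := fun i _ => (κ i).is_le
  calc ∑ i, (κ i : ℕ) = Fintype.card ι * r
      ↔ ∑ i, (κ i : ℕ) = ∑ _i : ι, r := by rw [sum_const, card_univ, smul_eq_mul]
    _ ↔ ∀ i ∈ univ, (κ i : ℕ) = r := sum_eq_sum_iff_of_le hle
    _ ↔ κ = fun _ => Fin.last r := by simp [funext_iff, Fin.ext_iff]

theorem F_mul_eq_prod_pow_div (n r : ℕ) (x : Fin n → ℝ) :
    F n r (n * r) x = (∏ i, x i) ^ r / (r.factorial : ℝ) ^ n := by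
  have hκ : univ.filter (fun κ : Fin n → Fin (r + 1) => ∑ i, (κ i : ℕ) = n * r) =
      {fun _ => Fin.last r} := by
    ext κ
    simpa using sum_val_eq_card_mul_iff_eq_last (κ := κ)
  simp [F, hκ, prod_div_distrib, prod_pow]

theorem stmt1_general (n r : ℕ) (hr : r ≠ 0) (x y : Fin n → ℝ) (hy : ∀ i, 0 ≤ y i)
    (hF : F n r (n * r) x ≤ F n r (n * r) y) : ∏ i, x i ≤ ∏ i, y i := by
  have hpow : (∏ i, x i) ^ r ≤ (∏ i, y i) ^ r := by
    rwa [F_mul_eq_prod_pow_div, F_mul_eq_prod_pow_div,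
      div_le_div_iff_of_pos_right (by positivity)] at hF
  exact le_of_pow_le_pow_left₀ hr (prod_nonneg fun i _ => hy i) hpow

theorem stmt1 (n r : ℕ) (hn : 1 ≤ n) (hr : 1 ≤ r) (x y : Fin n → ℝ)
    (hx : ∀ i, 0 ≤ x i) (hy : ∀ i, 0 ≤ y i)
    (hF : ∀ k : ℕ, r ≤ k → k ≤ n * r → F n r k x ≤ F n r k y) :
    (∏ i, x i) ^ ((1 : ℝ) / n) ≤ (∏ i, y i) ^ ((1 : ℝ) / n) :=
  Real.rpow_le_rpow (prod_nonneg fun i _ => hx i)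
    (stmt1_general n r (by lia) x y hy (hF _ (Nat.le_mul_of_pos_left r hn) le_rfl)) (by positivity)
end

section
/- Let r ≥ 1 be an integer, let p be a real number with 1 < p < r+1, and let a ≥ 0. Then ∫_0^∞ (at − log(1 + at + (at)^2/2! + ⋯ + (at)^r/r!)) · t^{-p-1} dt = a^p · J_r(p), where J_r(p) := ∫_0^∞ (s − log(1 + s + ⋯ + s^r/r!)) · s^{-p-1} ds is finite and positive. -/
open Finset MeasureTheory

/-- `P r s = 1 + s + s^2/2! + ... + s^r/r!`, the `r`-th Taylor polynomial of `exp`. -/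
noncomputable def P (r : ℕ) (s : ℝ) : ℝ := ∑ j ∈ Finset.range (r + 1), s ^ j / (Nat.factorial j)

/-!
For `s > 0` we have `1 ≤ P r s < exp s`, so `0 < s - log (P r s) ≤ s`. Since `log` is Lipschitz
near `1`, the difference `s - log (P r s) = log (exp s) - log (P r s)` is, like the Taylor remainder
`exp s - P r s`, of order `O(s ^ (r + 1))` at `0`. The Mellin integral at exponent `-p` therefore
converges at `0` because `p < r + 1` and at infinity because `1 < p`, and the substitution
`s = a * t` produces the factor `a ^ p`.
-/

open Asymptotics Filter Set Topology

theorem setIntegral_pos_of_forall_pos {α : Type*} [MeasurableSpace α] {μ : Measure α} {s : Set α}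
    {f : α → ℝ} (hs : MeasurableSet s) (hμs : μ s ≠ 0) (hf : IntegrableOn f s μ)
    (hpos : ∀ x ∈ s, 0 < f x) : 0 < ∫ x in s, f x ∂μ := by
  have hsupport : s ⊆ Function.support f := fun x hx => (hpos x hx).ne'
  rw [setIntegral_pos_iff_support_of_nonneg_ae
    (ae_restrict_of_forall_mem hs fun x hx => (hpos x hx).le) hf,
    inter_eq_self_of_subset_right hsupport]
  exact pos_iff_ne_zero.2 hμs

theorem integral_rpow_smul_comp_mul_left_Ioi {E : Type*} [NormedAddCommGroup E] [NormedSpace ℝ E]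
    (f : ℝ → E) (q : ℝ) {a : ℝ} (ha : 0 < a) :
    ∫ t in Ioi (0 : ℝ), t ^ q • f (a * t) = a ^ (-q - 1) • ∫ s in Ioi (0 : ℝ), s ^ q • f s := by
  have hscale : ∀ t ∈ Ioi (0 : ℝ), t ^ q • f (a * t) = a ^ (-q) • ((a * t) ^ q • f (a * t)) := by
    intro t ht
    rw [Real.mul_rpow ha.le (le_of_lt ht), smul_smul, ← mul_assoc, ← Real.rpow_add ha,
      neg_add_cancel, Real.rpow_zero, one_mul]
  calc ∫ t in Ioi (0 : ℝ), t ^ q • f (a * t)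
      = a ^ (-q) • ∫ t in Ioi (0 : ℝ), (a * t) ^ q • f (a * t) := by
        rw [setIntegral_congr_fun measurableSet_Ioi hscale, integral_smul]
    _ = a ^ (-q) • a⁻¹ • ∫ s in Ioi (0 : ℝ), s ^ q • f s := by
        rw [integral_comp_mul_left_Ioi (fun s => s ^ q • f s) 0 ha, mul_zero]
    _ = a ^ (-q - 1) • ∫ s in Ioi (0 : ℝ), s ^ q • f s := by
        rw [smul_smul, Real.rpow_sub_one ha.ne', div_eq_mul_inv]

section TaylorPolynomial

variable (r : ℕ)

theorem continuous_P : Continuous (P r) := by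
  unfold P
  fun_prop

theorem P_zero : P r 0 = 1 := by
  simp [P, Finset.sum_range_succ']

variable {s : ℝ}

theorem one_le_P (hs : 0 ≤ s) : 1 ≤ P r s := by
  have hterm : ∀ j ∈ Finset.range (r + 1), 0 ≤ s ^ j / (Nat.factorial j : ℝ) :=
    fun j _ => by positivity
  simpa [P] using Finset.single_le_sum hterm (Finset.mem_range.2 r.succ_pos)

theorem P_lt_exp (hs : 0 < s) : P r s < Real.exp s :=
  calc P r s < P r s + s ^ (r + 1) / Nat.factorial (r + 1) :=
        lt_add_of_pos_right _ (by positivity)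
    _ = ∑ j ∈ Finset.range (r + 2), s ^ j / Nat.factorial j :=
        (Finset.sum_range_succ _ _).symm
    _ ≤ Real.exp s := Real.sum_le_exp_of_nonneg hs.le _

theorem log_P_lt (hs : 0 < s) : Real.log (P r s) < s :=
  (Real.log_lt_iff_lt_exp (zero_lt_one.trans_le (one_le_P r hs.le))).2 (P_lt_exp r hs)

theorem continuousOn_sub_log_P : ContinuousOn (fun s => s - Real.log (P r s)) (Ici 0) :=
  continuousOn_id.sub ((continuous_P r).continuousOn.log
    fun _ hs => (zero_lt_one.trans_le (one_le_P r hs)).ne')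

theorem sub_log_P_isBigO_pow :
    (fun s => s - Real.log (P r s)) =O[𝓝 0] fun s => s ^ (r + 1) := by
  have hlim : Tendsto (fun s => (Real.exp s, P r s)) (𝓝 0) (𝓝 (1, 1)) :=
    (Real.continuous_exp.prodMk (continuous_P r)).tendsto' 0 (1, 1) (by simp [P_zero])
  have hlog : (fun s => Real.log (Real.exp s) - Real.log (P r s)) =O[𝓝 0]
      fun s => Real.exp s - P r s :=
    (Real.hasStrictDerivAt_log one_ne_zero).hasStrictFDerivAt.isBigO_sub.comp_tendsto hlim
  simp only [Real.log_exp] at hlog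
  exact hlog.trans (Real.exp_sub_sum_range_isBigO_pow (r + 1))

theorem sub_log_P_isBigO_id : (fun s => s - Real.log (P r s)) =O[atTop] fun s => s := by
  refine .of_norm_eventuallyLE ?_
  filter_upwards [eventually_gt_atTop 0] with s hs
  rw [Real.norm_of_nonneg (sub_pos.2 (log_P_lt r hs)).le]
  exact sub_le_self s (Real.log_nonneg (one_le_P r hs.le))

variable {p : ℝ}

theorem integrableOn_sub_log_P_mul_rpow (hp1 : 1 < p) (hpr : p < r + 1) :
    IntegrableOn (fun s => (s - Real.log (P r s)) * s ^ (-p - 1)) (Ioi 0) := by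
  have hloc : LocallyIntegrableOn (fun s => s - Real.log (P r s)) (Ioi 0) :=
    ((continuousOn_sub_log_P r).mono Ioi_subset_Ici_self).locallyIntegrableOn measurableSet_Ioi
  have htop : (fun s => s - Real.log (P r s)) =O[atTop] fun s => s ^ (-(-1) : ℝ) := by
    simpa only [neg_neg, Real.rpow_one] using sub_log_P_isBigO_id r
  have hzero : (fun s => s - Real.log (P r s)) =O[𝓝[>] 0]
      fun s => s ^ (-(-((r + 1 : ℕ) : ℝ))) := by
    simpa only [neg_neg, Real.rpow_natCast] using
      (sub_log_P_isBigO_pow r).mono nhdsWithin_le_nhds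
  simpa only [mul_comm] using mellin_convergent_of_isBigO_scalar hloc htop (neg_lt_neg hp1) hzero
    (neg_lt_neg (by exact_mod_cast hpr))

theorem integral_sub_log_P_mul_rpow_pos (hp1 : 1 < p) (hpr : p < r + 1) :
    0 < ∫ s in Ioi (0 : ℝ), (s - Real.log (P r s)) * s ^ (-p - 1) :=
  setIntegral_pos_of_forall_pos measurableSet_Ioi (by simp)
    (integrableOn_sub_log_P_mul_rpow r hp1 hpr)
    fun s hs => mul_pos (sub_pos.2 (log_P_lt r hs)) (Real.rpow_pos_of_pos hs _)

theorem integral_comp_mul_left_sub_log_P_mul_rpow (hp : p ≠ 0) {a : ℝ} (ha : 0 ≤ a) :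
    ∫ t in Ioi (0 : ℝ), (a * t - Real.log (P r (a * t))) * t ^ (-p - 1)
      = a ^ p * ∫ s in Ioi (0 : ℝ), (s - Real.log (P r s)) * s ^ (-p - 1) := by
  rcases ha.eq_or_lt with rfl | ha
  · simp [P_zero, Real.zero_rpow hp]
  · have hexp : -(-p - 1) - 1 = p := by ring
    simpa only [smul_eq_mul, hexp, mul_comm (_ ^ (-p - 1))] using
      integral_rpow_smul_comp_mul_left_Ioi (fun s => s - Real.log (P r s)) (-p - 1) ha

end TaylorPolynomial

theorem stmt7 (r : ℕ) (hr : 1 ≤ r) (p : ℝ) (hp1 : 1 < p) (hpr : p < r + 1)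
    (a : ℝ) (ha : 0 ≤ a) :
    IntegrableOn (fun s : ℝ => (s - Real.log (P r s)) * s ^ (-p - 1)) (Set.Ioi 0) volume ∧
    0 < ∫ s in Set.Ioi (0 : ℝ), (s - Real.log (P r s)) * s ^ (-p - 1) ∧
    ∫ t in Set.Ioi (0 : ℝ), (a * t - Real.log (P r (a * t))) * t ^ (-p - 1)
      = a ^ p * ∫ s in Set.Ioi (0 : ℝ), (s - Real.log (P r s)) * s ^ (-p - 1) :=
  ⟨integrableOn_sub_log_P_mul_rpow r hp1 hpr, integral_sub_log_P_mul_rpow_pos r hp1 hpr,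
    integral_comp_mul_left_sub_log_P_mul_rpow r (zero_lt_one.trans hp1).ne' ha⟩
end

section
/- (Proschan–Sethuraman) Let k, n ≥ 1 be integers, let I_k be the set of n-tuples p = (p_1,…,p_n) of nonnegative integers with ∑_i p_i = k, and let S ⊆ I_k be a Schur-concave index set, i.e. whenever p ∈ S, q ∈ I_k, and p majorizes q, then q ∈ S. Define H_S(x_1,…,x_n) = ∑_{p ∈ S} ∏_{i=1}^n x_i^{p_i}/p_i!. Then H_S is Schur-concave on [0,∞)^n: whenever x, y ∈ [0,∞)^n and x majorizes y, one has H_S(x) ≤ H_S(y). -/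
open Finset MeasureTheory

/-- The sum of the `m` largest entries of `x`, i.e. the largest sum of `m` entries. -/
noncomputable def sMax (n m : ℕ) (x : Fin n → ℝ) : ℝ :=
  sSup {s : ℝ | ∃ A : Finset (Fin n), A.card = m ∧ s = ∑ i ∈ A, x i}

/-- `x` majorizes `y`: equal total sums, and for each `1 ≤ m ≤ n-1` the sum of the
`m` largest entries of `x` is at least that of `y`. -/
def Majorizes (n : ℕ) (x y : Fin n → ℝ) : Prop :=
  (∑ i, x i = ∑ i, y i) ∧ ∀ m : ℕ, 1 ≤ m → m ≤ n - 1 → sMax n m y ≤ sMax n m x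

/-- The sum of the `m` largest entries of a tuple of nonnegative integers. -/
def sMaxNat (n m : ℕ) (p : Fin n → ℕ) : ℕ :=
  Finset.sup (Finset.powersetCard m (Finset.univ : Finset (Fin n))) (fun A => ∑ i ∈ A, p i)

/-- Majorization for tuples of nonnegative integers. -/
def MajorizesNat (n : ℕ) (p q : Fin n → ℕ) : Prop :=
  (∑ i, p i = ∑ i, q i) ∧ ∀ m : ℕ, 1 ≤ m → m ≤ n - 1 → sMaxNat n m q ≤ sMaxNat n m p

/-!
Expanding over `S` and grouping the terms by the coordinates away from a pair `i`, `j` and by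
`m = p i + p j` turns `H_S` into a nonnegative combination of two-variable sums
`∑ u ^ a / a! * v ^ b / b!` over `a + b = m`, `max a b ≤ M`: Schur-concavity of `S` says that the
admissible exponents `(a, b)` form such a central window. Along `u + v = σ` the derivative of a
window sum telescopes to its two boundary terms, and their sign shows that the sum grows as `u` and
`v` approach each other. So `H_S` increases under every transfer from a richer to a poorer
coordinate that does not reverse their order, and (Muirhead; Hardy, Littlewood and Pólya) such
transfers lead from `x` to any sorted `y` majorized by `x`.
-/

section DividedPower

/-- The divided power `z ^ l / l!`, the factor contributed by one coordinate to a term of `H_S`. -/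
def divPow {K : Type*} [Field K] (l : ℕ) (z : K) : K := z ^ l / (l.factorial : K)

lemma divPow_nonneg {K : Type*} [Field K] [LinearOrder K] [IsStrictOrderedRing K] (l : ℕ) {z : K}
    (hz : 0 ≤ z) : 0 ≤ divPow l z := by
  unfold divPow
  positivity

lemma divPow_mul_divPow_le {K : Type*} [Field K] [LinearOrder K] [IsStrictOrderedRing K] {a b : ℕ}
    (hab : a ≤ b) {u v : K} (hv : 0 ≤ v) (hvu : v ≤ u) :
    divPow a u * divPow b v ≤ divPow b u * divPow a v := by
  obtain ⟨d, rfl⟩ := Nat.exists_eq_add_of_le hab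
  have hu : 0 ≤ u := hv.trans hvu
  have hpow : u ^ a * v ^ (a + d) ≤ u ^ (a + d) * v ^ a :=
    calc u ^ a * v ^ (a + d) = u ^ a * v ^ a * v ^ d := by ring
      _ ≤ u ^ a * v ^ a * u ^ d := by gcongr
      _ = u ^ (a + d) * v ^ a := by ring
  unfold divPow
  rw [div_mul_div_comm, div_mul_div_comm, mul_comm ((a + d).factorial : K)]
  gcongr

lemma sum_antidiagonal_divPow_mul_divPow {K : Type*} [Field K] [CharZero K] (m : ℕ) (u v : K) :
    ∑ w ∈ antidiagonal m, divPow w.1 u * divPow w.2 v = divPow m (u + v) := by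
  unfold divPow
  rw [(Commute.all u v).add_pow', sum_div]
  refine sum_congr rfl fun w hw => ?_
  obtain rfl := HasAntidiagonal.mem_antidiagonal.1 hw
  have hchoose : ((w.1 + w.2).choose w.1 : K) * w.1.factorial * w.2.factorial
      = (w.1 + w.2).factorial := mod_cast Nat.choose_symm_add (a := w.1) (b := w.2) ▸
      Nat.add_choose_mul_factorial_mul_factorial w.1 w.2
  have h1 : (w.1.factorial : K) ≠ 0 := mod_cast w.1.factorial_ne_zero
  have h2 : (w.2.factorial : K) ≠ 0 := mod_cast w.2.factorial_ne_zero
  have h3 : ((w.1 + w.2).factorial : K) ≠ 0 := mod_cast (w.1 + w.2).factorial_ne_zero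
  rw [nsmul_eq_mul, div_mul_div_comm, div_eq_div_iff (mul_ne_zero h1 h2) h3, ← hchoose]
  ring

lemma hasDerivAt_divPow_succ {K : Type*} [NontriviallyNormedField K] [CharZero K] (l : ℕ) (z : K) :
    HasDerivAt (divPow (l + 1)) (divPow l z) z := by
  refine ((hasDerivAt_pow (l + 1) z).div_const ((l + 1).factorial : K)).congr_deriv ?_
  have hl : (l.factorial : K) ≠ 0 := mod_cast l.factorial_ne_zero
  have hl' : ((l : K) + 1) ≠ 0 := mod_cast l.succ_ne_zero
  rw [divPow, Nat.factorial_succ]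
  push_cast
  field_simp

end DividedPower

section CentralWindow

lemma hasDerivAt_sum_divPow_mul_divPow {K : Type*} [NontriviallyNormedField K] [CharZero K]
    (a b N : ℕ) (σ t : K) :
    HasDerivAt (fun t => ∑ s ∈ range N, divPow (a + s + 1) t * divPow (b + (N - s)) (σ - t))
      (divPow a t * divPow (b + N) (σ - t) - divPow (a + N) t * divPow b (σ - t)) t := by
  let g : ℕ → K := fun s => divPow (a + s) t * divPow (b + (N - s)) (σ - t)
  have hterm : ∀ s ∈ range N, HasDerivAt
      (fun t => divPow (a + s + 1) t * divPow (b + (N - s)) (σ - t)) (g s - g (s + 1)) t := by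
    intro s hs
    obtain ⟨d, rfl⟩ := Nat.exists_eq_add_of_lt (mem_range.1 hs)
    have hleft := hasDerivAt_divPow_succ (a + s) t
    have hright := (hasDerivAt_divPow_succ (b + d) (σ - t)).comp_const_sub σ t
    have hexp : b + (s + d + 1 - s) = b + d + 1 := by omega
    have hexp' : b + (s + d + 1 - (s + 1)) = b + d := by omega
    simp only [g, hexp, hexp', ← add_assoc]
    exact (hleft.mul hright).congr_deriv (by ring)
  refine (HasDerivAt.fun_sum hterm).congr_deriv ?_
  rw [sum_range_sub']
  simp only [g, add_zero, Nat.sub_zero, Nat.sub_self]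

lemma antitoneOn_sum_divPow_mul_divPow (a N : ℕ) (σ : ℝ) :
    AntitoneOn (fun t => ∑ s ∈ range N, divPow (a + s + 1) t * divPow (a + (N - s)) (σ - t))
      (Set.Icc (σ / 2) σ) := by
  have hderiv := hasDerivAt_sum_divPow_mul_divPow a a N σ
  refine antitoneOn_of_deriv_nonpos (convex_Icc _ _)
    (fun t _ => (hderiv t).continuousAt.continuousWithinAt)
    (fun t _ => (hderiv t).differentiableAt.differentiableWithinAt) fun t ht => ?_
  rw [interior_Icc, Set.mem_Ioo] at ht
  rw [(hderiv t).deriv, sub_nonpos]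
  exact divPow_mul_divPow_le (Nat.le_add_right a N) (by linarith) (by linarith)

lemma sum_antidiagonal_max_le_eq_sum_range (a N : ℕ) {K : Type*} [Field K] (u v : K) :
    ∑ w ∈ antidiagonal (a + a + N + 1) with max w.1 w.2 ≤ a + N, divPow w.1 u * divPow w.2 v
      = ∑ s ∈ range N, divPow (a + s + 1) u * divPow (a + (N - s)) v := by
  symm
  refine sum_nbij' (fun s => (a + s + 1, a + (N - s))) (fun w => w.1 - (a + 1)) ?_ ?_ ?_ ?_ ?_
  · intro s hs
    simp only [mem_range, mem_filter, HasAntidiagonal.mem_antidiagonal] at hs ⊢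
    omega
  · intro w hw
    simp only [mem_range, mem_filter, HasAntidiagonal.mem_antidiagonal] at hw ⊢
    omega
  · intro s _
    dsimp only
    omega
  · intro w hw
    simp only [mem_filter, HasAntidiagonal.mem_antidiagonal] at hw
    ext <;> dsimp only <;> omega
  · exact fun _ _ => rfl

lemma sum_antidiagonal_max_le_mono (m M : ℕ) {u v u' v' : ℝ} (hsum : u + v = u' + v')
    (hv : 0 ≤ v) (hvu' : v' ≤ u') (hu' : u' ≤ u) :
    ∑ w ∈ antidiagonal m with max w.1 w.2 ≤ M, divPow w.1 u * divPow w.2 v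
      ≤ ∑ w ∈ antidiagonal m with max w.1 w.2 ≤ M, divPow w.1 u' * divPow w.2 v' := by
  rcases le_or_gt m M with hmM | hMm
  · have hall : ∀ w ∈ antidiagonal m, max w.1 w.2 ≤ M := fun w hw => by
      rw [HasAntidiagonal.mem_antidiagonal] at hw
      omega
    rw [filter_true_of_mem hall, sum_antidiagonal_divPow_mul_divPow,
      sum_antidiagonal_divPow_mul_divPow, hsum]
  rcases lt_or_ge (2 * M) m with hM | hM
  · have hnone : ∀ w ∈ antidiagonal m, ¬max w.1 w.2 ≤ M := fun w hw => by
      rw [HasAntidiagonal.mem_antidiagonal] at hw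
      omega
    rw [filter_false_of_mem hnone, sum_empty, sum_empty]
  · obtain ⟨a, N, rfl, rfl⟩ : ∃ a N, m = a + a + N + 1 ∧ M = a + N :=
      ⟨m - M - 1, 2 * M + 1 - m, by omega, by omega⟩
    obtain rfl : v = u' + v' - u := by linarith
    have hanti := antitoneOn_sum_divPow_mul_divPow a N (u' + v')
      (show u' ∈ Set.Icc _ _ from ⟨by linarith, by linarith⟩)
      (show u ∈ Set.Icc _ _ from ⟨by linarith, by linarith⟩) hu'
    simpa only [sum_antidiagonal_max_le_eq_sum_range, add_sub_cancel_left] using hanti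

lemma eq_filter_max_le_of_closed {m : ℕ} {T : Finset (ℕ × ℕ)} (hTm : T ⊆ antidiagonal m)
    (hT : ∀ w ∈ T, ∀ w' ∈ antidiagonal m, max w'.1 w'.2 ≤ max w.1 w.2 → w' ∈ T)
    (hne : T.Nonempty) : ∃ M, T = {w ∈ antidiagonal m | max w.1 w.2 ≤ M} := by
  obtain ⟨w, hw, hmax⟩ := T.exists_max_image (fun w => max w.1 w.2) hne
  refine ⟨max w.1 w.2, Finset.ext fun w' => ?_⟩
  rw [mem_filter]
  exact ⟨fun hw' => ⟨hTm hw', hmax w' hw'⟩, fun hw' => hT w hw w' hw'.1 hw'.2⟩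

end CentralWindow

section Transfer

variable {ι M : Type*}

/-- `x` and `y` differ at most by a redistribution of the total held by the coordinates
`i` and `j`. -/
structure PairTransfer [Add M] (i j : ι) (x y : ι → M) : Prop where
  add_eq : x i + x j = y i + y j
  eq_off : ∀ r, r ≠ i → r ≠ j → x r = y r

namespace PairTransfer

/-- The equivalence relation whose classes are the fibres over which a sum over tuples is split
when only the coordinates `i` and `j` are to vary. -/
def setoid [Add M] (i j : ι) : Setoid (ι → M) where
  r := PairTransfer i j
  iseqv :=
    { refl := fun _ => ⟨rfl, fun _ _ _ => rfl⟩
      symm := fun h => ⟨h.add_eq.symm, fun r hi hj => (h.eq_off r hi hj).symm⟩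
      trans := fun h h' => ⟨h.add_eq.trans h'.add_eq,
        fun r hi hj => (h.eq_off r hi hj).trans (h'.eq_off r hi hj)⟩ }

lemma swap [AddCommMagma M] {i j : ι} {x y : ι → M} (h : PairTransfer i j x y) :
    PairTransfer j i x y :=
  ⟨by rw [add_comm, h.add_eq, add_comm], fun r hj hi => h.eq_off r hi hj⟩

lemma sum_eq [AddCommMonoid M] {i j : ι} {x y : ι → M} (h : PairTransfer i j x y) (hij : i ≠ j)
    {A : Finset ι} (hi : i ∈ A) (hj : j ∈ A) : ∑ r ∈ A, x r = ∑ r ∈ A, y r := by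
  classical
  have hj' : j ∈ A.erase i := mem_erase.2 ⟨hij.symm, hj⟩
  rw [← add_sum_erase A x hi, ← add_sum_erase A y hi, ← add_sum_erase _ x hj',
    ← add_sum_erase _ y hj', ← add_assoc, ← add_assoc, h.add_eq]
  congr 1
  refine sum_congr rfl fun r hr => ?_
  simp only [mem_erase] at hr
  exact h.eq_off r hr.2.1 hr.1

lemma prod_compl_eq [Add M] [Fintype ι] [DecidableEq ι] {R : Type*} [CommMonoid R] {i j : ι}
    {x y : ι → M} (h : PairTransfer i j x y) (f : ι → M → R) :
    ∏ r ∈ {i, j}ᶜ, f r (x r) = ∏ r ∈ {i, j}ᶜ, f r (y r) := by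
  refine prod_congr rfl fun r hr => ?_
  simp only [mem_compl, mem_insert, mem_singleton, not_or] at hr
  rw [h.eq_off r hr.1 hr.2]

lemma update_update [Add M] [DecidableEq ι] {i j : ι} (hij : i ≠ j) (x : ι → M) {a b : M}
    (hab : x i + x j = a + b) :
    PairTransfer i j x (Function.update (Function.update x i a) j b) where
  add_eq := by simp [hij, hab]
  eq_off r hi hj := by simp [hi, hj]

lemma card_ne_lt [Add M] [DecidableEq M] [Fintype ι] {i j : ι} {x x' y : ι → M}
    (h : PairTransfer i j x x') (hi : x i ≠ y i) (hj : x j ≠ y j)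
    (hfix : x' i = y i ∨ x' j = y j) : #{r | x' r ≠ y r} < #{r | x r ≠ y r} := by
  refine card_lt_card ((ssubset_iff_of_subset fun r hr => ?_).2 ?_)
  · rw [mem_filter_univ] at hr ⊢
    by_cases hri : r = i
    · exact hri ▸ hi
    by_cases hrj : r = j
    · exact hrj ▸ hj
    · rwa [h.eq_off r hri hrj]
  · rcases hfix with hfix | hfix
    · exact ⟨i, by simpa using hi, by simpa using hfix⟩
    · exact ⟨j, by simpa using hj, by simpa using hfix⟩

end PairTransfer

/-- A Robin Hood transfer (T-transform): the coordinate `i` gives some of its amount to the other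
coordinate `j` and still keeps at least as much as `j` then has. -/
structure RobinHood [Add M] [LE M] (i j : ι) (x y : ι → M) : Prop extends PairTransfer i j x y where
  ne : i ≠ j
  le_giver : y i ≤ x i
  le_of_order : y j ≤ y i

namespace RobinHood

variable {i j : ι} {x y : ι → M}

lemma update_update [Add M] [LE M] [DecidableEq ι] (hij : i ≠ j) {a b : M}
    (hab : x i + x j = a + b) (ha : a ≤ x i) (hba : b ≤ a) :
    RobinHood i j x (Function.update (Function.update x i a) j b) where
  toPairTransfer := .update_update hij x hab
  ne := hij
  le_giver := by simpa [hij] using ha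
  le_of_order := by simpa [hij] using hba

variable [AddCommGroup M] [LinearOrder M] [IsOrderedAddMonoid M]

lemma receiver_le (h : RobinHood i j x y) : x j ≤ y j := by
  by_contra! hlt
  exact (add_lt_add_of_le_of_lt h.le_giver hlt).ne' h.add_eq

lemma nonneg (h : RobinHood i j x y) (hx : ∀ r, 0 ≤ x r) (r : ι) : 0 ≤ y r := by
  have hj : 0 ≤ y j := (hx j).trans h.receiver_le
  by_cases hri : r = i
  · exact hri ▸ hj.trans h.le_of_order
  by_cases hrj : r = j
  · exact hrj ▸ hj
  · exact h.eq_off r hri hrj ▸ hx r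

lemma exists_of_surplus_of_deficit (hij : i ≠ j) (hyij : y j ≤ y i) (hi : y i ≤ x i)
    (hj : x j ≤ y j) : ∃ x', RobinHood i j x x' ∧ y i ≤ x' i ∧ (x' i = y i ∨ x' j = y j) := by
  classical
  obtain ⟨a, b, hab, hya, hax, hby, hfix⟩ :
      ∃ a b, x i + x j = a + b ∧ y i ≤ a ∧ a ≤ x i ∧ b ≤ y j ∧ (a = y i ∨ b = y j) := by
    rcases le_total (x i + x j) (y i + y j) with hle | hle
    · exact ⟨y i, x i + x j - y i, (add_sub_cancel _ _).symm, le_rfl, hi,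
        sub_le_iff_le_add'.2 hle, .inl rfl⟩
    · exact ⟨x i + x j - y j, y j, (sub_add_cancel _ _).symm, le_sub_iff_add_le.2 hle,
        sub_le_iff_le_add.2 (by gcongr), le_rfl, .inr rfl⟩
  refine ⟨_, update_update hij hab hax (hby.trans (hyij.trans hya)), ?_⟩
  simpa [hij] using ⟨hya, hfix⟩

end RobinHood

end Transfer

section Muirhead

variable {ι M : Type*} [LinearOrder ι] [LocallyFiniteOrderBot ι] [AddCommGroup M] [LinearOrder M]
  [IsOrderedAddMonoid M] {x y : ι → M}

lemma RobinHood.sum_Iic_le {i j : ι} {x' : ι → M} (h : RobinHood i j x x') (hij : i < j)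
    (hpre : ∀ s, ∑ r ∈ Iic s, y r ≤ ∑ r ∈ Iic s, x r) (hbelow : ∀ r < j, y r ≤ x r)
    (hi : y i ≤ x' i) (s : ι) : ∑ r ∈ Iic s, y r ≤ ∑ r ∈ Iic s, x' r := by
  rcases le_or_gt j s with hjs | hsj
  · rw [← h.sum_eq h.ne (mem_Iic.2 (hij.le.trans hjs)) (mem_Iic.2 hjs)]
    exact hpre s
  · refine sum_le_sum fun r hr => ?_
    have hrj : r < j := (mem_Iic.1 hr).trans_lt hsj
    by_cases hri : r = i
    · exact hri ▸ hi
    · exact h.eq_off r hri hrj.ne ▸ hbelow r hrj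

variable [Fintype ι]

lemma exists_lt_surplus_deficit (hsum : ∑ r, x r = ∑ r, y r)
    (hpre : ∀ s, ∑ r ∈ Iic s, y r ≤ ∑ r ∈ Iic s, x r) (hxy : x ≠ y) :
    ∃ i j, i < j ∧ y i < x i ∧ x j < y j ∧ ∀ r < j, y r ≤ x r := by
  obtain ⟨d, hd⟩ : ∃ d, x d < y d := by
    by_contra! hle
    have heq := (sum_eq_sum_iff_of_le fun r _ => hle r).1 hsum.symm
    exact hxy (funext fun r => (heq r (mem_univ r)).symm)
  obtain ⟨j, hjmin⟩ := exists_minimal (s := {r | x r < y r}) ⟨d, (mem_filter_univ d).2 hd⟩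
  have hj : x j < y j := (mem_filter_univ j).1 hjmin.prop
  have hbelow : ∀ r < j, y r ≤ x r := fun r hr =>
    not_lt.1 fun hlt => hjmin.not_prop_of_lt hr ((mem_filter_univ r).2 hlt)
  obtain ⟨i, hij, hi⟩ : ∃ i < j, y i < x i := by
    by_contra! hle
    have hle' : ∀ r ∈ Iic j, x r ≤ y r := fun r hr =>
      (mem_Iic.1 hr).lt_or_eq.elim (hle r) fun hrj => hrj ▸ hj.le
    exact (sum_lt_sum hle' ⟨j, mem_Iic.2 le_rfl, hj⟩).not_ge (hpre j)
  exact ⟨i, j, hij, hi, hj, hbelow⟩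

lemma exists_robinHood_card_ne_lt (hy : Antitone y) (hsum : ∑ r, x r = ∑ r, y r)
    (hpre : ∀ s, ∑ r ∈ Iic s, y r ≤ ∑ r ∈ Iic s, x r) (hxy : x ≠ y) :
    ∃ i j x', RobinHood i j x x' ∧ (∀ s, ∑ r ∈ Iic s, y r ≤ ∑ r ∈ Iic s, x' r) ∧
      #{r | x' r ≠ y r} < #{r | x r ≠ y r} := by
  obtain ⟨i, j, hij, hi, hj, hbelow⟩ := exists_lt_surplus_deficit hsum hpre hxy
  obtain ⟨x', h, hi', hfix⟩ :=
    RobinHood.exists_of_surplus_of_deficit hij.ne (hy hij.le) hi.le hj.le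
  exact ⟨i, j, x', h, h.sum_Iic_le hij hpre hbelow hi', h.card_ne_lt hi.ne' hj.ne hfix⟩

theorem reflTransGen_robinHood_of_sum_Iic_le (hy : Antitone y) (hsum : ∑ r, x r = ∑ r, y r)
    (hpre : ∀ s, ∑ r ∈ Iic s, y r ≤ ∑ r ∈ Iic s, x r) :
    Relation.ReflTransGen (fun x x' => ∃ i j, RobinHood i j x x') x y := by
  induction hcard : #{r | x r ≠ y r} using Nat.strong_induction_on generalizing x with
  | _ N ih =>
    subst hcard
    by_cases hxy : x = y
    · rw [hxy]
    obtain ⟨i, j, x', h, hpre', hlt⟩ := exists_robinHood_card_ne_lt hy hsum hpre hxy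
    have hsum' : ∑ r, x' r = ∑ r, y r := (h.sum_eq h.ne (mem_univ i) (mem_univ j)).symm.trans hsum
    exact .head ⟨i, j, h⟩ (ih _ hlt hsum' hpre' rfl)

end Muirhead

section SortedMajorization

lemma exists_perm_antitone {n : ℕ} {α : Type*} [LinearOrder α] (x : Fin n → α) :
    ∃ σ : Equiv.Perm (Fin n), Antitone (x ∘ σ) :=
  ⟨Tuple.sort (OrderDual.toDual ∘ x), Tuple.monotone_sort (OrderDual.toDual ∘ x)⟩

lemma sum_le_sum_Iic_of_antitone {ι M : Type*} [LinearOrder ι] [LocallyFiniteOrderBot ι]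
    [AddCommGroup M] [LinearOrder M] [IsOrderedAddMonoid M] {x : ι → M} (hx : Antitone x) {j : ι}
    {A : Finset ι} (hA : #A = #(Iic j)) : ∑ i ∈ A, x i ≤ ∑ i ∈ Iic j, x i := by
  have hout : ∑ i ∈ A \ Iic j, x i ≤ #(A \ Iic j) • x j :=
    sum_le_card_nsmul _ _ _ fun i hi => by
      rw [mem_sdiff, mem_Iic, not_le] at hi
      exact hx hi.2.le
  have hin : #(Iic j \ A) • x j ≤ ∑ i ∈ Iic j \ A, x i :=
    card_nsmul_le_sum _ _ _ fun i hi => hx (mem_Iic.1 (mem_sdiff.1 hi).1)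
  rw [card_sdiff_comm hA] at hout
  calc ∑ i ∈ A, x i = ∑ i ∈ A ∩ Iic j, x i + ∑ i ∈ A \ Iic j, x i :=
        (sum_inter_add_sum_sdiff _ _ _).symm
    _ ≤ ∑ i ∈ Iic j ∩ A, x i + ∑ i ∈ Iic j \ A, x i := by
        rw [inter_comm]
        exact add_le_add_right (hout.trans hin) _
    _ = ∑ i ∈ Iic j, x i := sum_inter_add_sum_sdiff _ _ _

variable {n : ℕ}

lemma sMax_comp_perm (m : ℕ) (x : Fin n → ℝ) (σ : Equiv.Perm (Fin n)) :
    sMax n m (x ∘ σ) = sMax n m x := by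
  unfold sMax
  congr 1
  ext s
  constructor
  · rintro ⟨A, hA, rfl⟩
    exact ⟨A.map σ.toEmbedding, by simpa using hA, by simp⟩
  · rintro ⟨A, hA, rfl⟩
    exact ⟨A.map σ.symm.toEmbedding, by simpa using hA, by simp⟩

lemma sMax_eq_sum_Iic_of_antitone {x : Fin n → ℝ} (hx : Antitone x) (j : Fin n) :
    sMax n (j + 1) x = ∑ i ∈ Iic j, x i := by
  refine IsGreatest.csSup_eq ⟨⟨Iic j, Fin.card_Iic j, rfl⟩, ?_⟩
  rintro s ⟨A, hA, rfl⟩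
  exact sum_le_sum_Iic_of_antitone hx (hA.trans (Fin.card_Iic j).symm)

lemma Majorizes.comp_perm {x y : Fin n → ℝ} (h : Majorizes n x y) (σ τ : Equiv.Perm (Fin n)) :
    Majorizes n (x ∘ σ) (y ∘ τ) := by
  refine ⟨?_, fun m hm hmn => ?_⟩
  · exact (Equiv.sum_comp σ x).trans (h.1.trans (Equiv.sum_comp τ y).symm)
  · rw [sMax_comp_perm, sMax_comp_perm]
    exact h.2 m hm hmn

lemma Majorizes.sum_Iic_le {x y : Fin n → ℝ} (h : Majorizes n x y) (hx : Antitone x)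
    (hy : Antitone y) (j : Fin n) : ∑ i ∈ Iic j, y i ≤ ∑ i ∈ Iic j, x i := by
  by_cases hj : (j : ℕ) + 1 = n
  · have huniv : Iic j = univ := by
      rw [← card_eq_iff_eq_univ, Fin.card_Iic, hj, Fintype.card_fin]
    rw [huniv, h.1]
  · rw [← sMax_eq_sum_Iic_of_antitone hx, ← sMax_eq_sum_Iic_of_antitone hy]
    exact h.2 (j + 1) (by omega) (by omega)

end SortedMajorization

section IndexSet

variable {n : ℕ} {p q : Fin n → ℕ}

lemma sMaxNat_le_of_forall_exists {m : ℕ}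
    (h : ∀ A : Finset (Fin n), ∃ B : Finset (Fin n), #B = #A ∧ ∑ i ∈ A, q i ≤ ∑ i ∈ B, p i) :
    sMaxNat n m q ≤ sMaxNat n m p := by
  refine Finset.sup_le fun A hA => ?_
  obtain ⟨B, hB, hle⟩ := h A
  have hBm : B ∈ powersetCard m univ :=
    mem_powersetCard_univ.2 (hB.trans (mem_powersetCard_univ.1 hA))
  exact hle.trans (le_sup (f := fun A => ∑ i ∈ A, p i) hBm)

lemma majorizesNat_comp_perm (p : Fin n → ℕ) (σ : Equiv.Perm (Fin n)) :
    MajorizesNat n p (p ∘ σ) :=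
  ⟨(Equiv.sum_comp σ p).symm, fun _ _ _ => sMaxNat_le_of_forall_exists fun A =>
    ⟨A.map σ.toEmbedding, by simp, by simp⟩⟩

lemma PairTransfer.exists_sum_le_of_notMem {i j : Fin n} (h : PairTransfer i j p q)
    (hi : q i ≤ max (p i) (p j)) {A : Finset (Fin n)} (hj : j ∉ A) :
    ∃ B : Finset (Fin n), #B = #A ∧ ∑ r ∈ A, q r ≤ ∑ r ∈ B, p r := by
  rcases le_max_iff.1 hi with hle | hle
  · refine ⟨A, rfl, sum_le_sum fun r hr => ?_⟩
    by_cases hri : r = i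
    · exact hri ▸ hle
    · exact (h.eq_off r hri (ne_of_mem_of_not_mem hr hj)).ge
  · refine ⟨A.map (Equiv.swap i j).toEmbedding, card_map _, ?_⟩
    rw [sum_map]
    refine sum_le_sum fun r hr => ?_
    by_cases hri : r = i
    · simpa [hri] using hle
    · have hrj := ne_of_mem_of_not_mem hr hj
      simpa [Equiv.swap_apply_of_ne_of_ne hri hrj] using (h.eq_off r hri hrj).ge

lemma PairTransfer.majorizesNat {i j : Fin n} (hij : i ≠ j) (h : PairTransfer i j p q)
    (hmax : max (q i) (q j) ≤ max (p i) (p j)) : MajorizesNat n p q := by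
  obtain ⟨hi, hj⟩ := max_le_iff.1 hmax
  refine ⟨h.sum_eq hij (mem_univ i) (mem_univ j), fun _ _ _ =>
    sMaxNat_le_of_forall_exists fun A => ?_⟩
  by_cases hjA : j ∈ A
  · by_cases hiA : i ∈ A
    · exact ⟨A, rfl, (h.sum_eq hij hiA hjA).ge⟩
    · exact h.swap.exists_sum_le_of_notMem (max_comm (p i) (p j) ▸ hj) hiA
  · exact h.exists_sum_le_of_notMem hi hjA

end IndexSet

section DivPowSum

variable {ι : Type*} [Fintype ι] {K : Type*} [Field K]

/-- The polynomial `H_S` of a finite set `S` of exponent tuples. -/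
def divPowSum (S : Finset (ι → ℕ)) (x : ι → K) : K := ∑ p ∈ S, ∏ i, divPow (p i) (x i)

lemma divPowSum_comp_perm {S : Finset (ι → ℕ)} (hS : ∀ p ∈ S, ∀ σ : Equiv.Perm ι, p ∘ σ ∈ S)
    (x : ι → K) (σ : Equiv.Perm ι) : divPowSum S (x ∘ σ) = divPowSum S x := by
  refine sum_nbij' (fun p => p ∘ σ.symm) (fun p => p ∘ σ) (fun p hp => hS p hp _)
    (fun p hp => hS p hp _) (fun p _ => by ext; simp) (fun p _ => by ext; simp) fun p _ => ?_
  rw [← Equiv.prod_comp σ fun i => divPow ((p ∘ σ.symm) i) (x i)]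
  simp only [Function.comp_apply, Equiv.symm_apply_apply]

lemma divPowSum_eq_mul_sum_image [DecidableEq ι] {i j : ι} (hij : i ≠ j)
    {F : Finset (ι → ℕ)} {p : ι → ℕ} (hF : ∀ q ∈ F, PairTransfer i j p q) (x : ι → K) :
    divPowSum F x = (∏ r ∈ {i, j}ᶜ, divPow (p r) (x r)) *
      ∑ w ∈ F.image (fun q => (q i, q j)), divPow w.1 (x i) * divPow w.2 (x j) := by
  have hinj : Set.InjOn (fun q : ι → ℕ => (q i, q j)) F := by
    intro q hq q' hq' heq
    obtain ⟨hi, hj⟩ := Prod.mk.inj heq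
    funext r
    by_cases hri : r = i
    · exact hri ▸ hi
    by_cases hrj : r = j
    · exact hrj ▸ hj
    · exact ((hF q hq).eq_off r hri hrj).symm.trans ((hF q' hq').eq_off r hri hrj)
  rw [sum_image hinj, mul_sum]
  refine sum_congr rfl fun q hq => ?_
  rw [(hF q hq).prod_compl_eq fun r a => divPow a (x r), ← prod_compl_mul_prod {i, j},
    prod_pair hij]

lemma divPowSum_le_of_forall_pairTransfer {i j : ι} {F : Finset (ι → ℕ)} {p : ι → ℕ}
    (hF : ∀ q ∈ F, PairTransfer i j p q)
    (hclosed : ∀ q ∈ F, ∀ q', PairTransfer i j q q' → max (q' i) (q' j) ≤ max (q i) (q j) → q' ∈ F)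
    {x y : ι → ℝ} (h : RobinHood i j x y) (hx : ∀ r, 0 ≤ x r) : divPowSum F x ≤ divPowSum F y := by
  classical
  rcases F.eq_empty_or_nonempty with rfl | hne
  · exact le_rfl
  obtain ⟨M, hM⟩ : ∃ M, F.image (fun q => (q i, q j))
      = {w ∈ antidiagonal (p i + p j) | max w.1 w.2 ≤ M} := by
    refine eq_filter_max_le_of_closed ?_ ?_ (hne.image _)
    · refine image_subset_iff.2 fun q hq => ?_
      rw [HasAntidiagonal.mem_antidiagonal]
      exact (hF q hq).add_eq.symm
    · rintro w hw ⟨a, b⟩ hab hle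
      obtain ⟨q, hq, rfl⟩ := mem_image.1 hw
      rw [HasAntidiagonal.mem_antidiagonal] at hab
      have hq' := PairTransfer.update_update h.ne q ((hF q hq).add_eq.symm.trans hab.symm)
      exact mem_image.2 ⟨_, hclosed q hq _ hq' (by simpa [h.ne] using hle), by simp [h.ne]⟩
  rw [divPowSum_eq_mul_sum_image h.ne hF, divPowSum_eq_mul_sum_image h.ne hF,
    h.prod_compl_eq fun r => divPow (p r), hM]
  exact mul_le_mul_of_nonneg_left
    (sum_antidiagonal_max_le_mono _ _ h.add_eq (hx j) h.le_of_order h.le_giver)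
    (prod_nonneg fun r _ => divPow_nonneg _ (h.nonneg hx r))

lemma divPowSum_le_of_robinHood {i j : ι} {S : Finset (ι → ℕ)}
    (hS : ∀ p ∈ S, ∀ q, PairTransfer i j p q → max (q i) (q j) ≤ max (p i) (p j) → q ∈ S)
    {x y : ι → ℝ} (h : RobinHood i j x y) (hx : ∀ r, 0 ≤ x r) : divPowSum S x ≤ divPowSum S y := by
  classical
  unfold divPowSum
  rw [sum_partition (PairTransfer.setoid i j), sum_partition (PairTransfer.setoid i j)]
  refine sum_le_sum fun c hc => ?_
  obtain ⟨p, -, rfl⟩ := mem_image.1 hc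
  refine divPowSum_le_of_forall_pairTransfer (p := p) (fun q hq => ?_) (fun q hq q' hqq' hle => ?_)
    h hx
  · exact Setoid.symm' _ (Quotient.exact (mem_filter.1 hq).2)
  · obtain ⟨hqS, hqp⟩ := mem_filter.1 hq
    exact mem_filter.2 ⟨hS q hqS q' hqq' hle, (Quotient.sound (Setoid.symm' _ hqq')).trans hqp⟩

lemma divPowSum_le_of_reflTransGen_robinHood {S : Finset (ι → ℕ)}
    (hS : ∀ i j, i ≠ j → ∀ p ∈ S, ∀ q, PairTransfer i j p q →
      max (q i) (q j) ≤ max (p i) (p j) → q ∈ S)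
    {x y : ι → ℝ} (h : Relation.ReflTransGen (fun x y => ∃ i j, RobinHood i j x y) x y)
    (hx : ∀ r, 0 ≤ x r) : divPowSum S x ≤ divPowSum S y := by
  induction h using Relation.ReflTransGen.head_induction_on with
  | refl => exact le_rfl
  | head hstep _ ih =>
    obtain ⟨i, j, hij⟩ := hstep
    exact (divPowSum_le_of_robinHood (hS i j hij.ne) hij hx).trans (ih (hij.nonneg hx))

end DivPowSum

theorem stmt9_general {n : ℕ} {S : Finset (Fin n → ℕ)}
    (hS : ∀ p ∈ S, ∀ q, MajorizesNat n p q → q ∈ S) {x y : Fin n → ℝ} (hx : ∀ i, 0 ≤ x i)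
    (hxy : Majorizes n x y) :
    ∑ p ∈ S, ∏ i, x i ^ p i / (Nat.factorial (p i))
      ≤ ∑ p ∈ S, ∏ i, y i ^ p i / (Nat.factorial (p i)) := by
  change divPowSum S x ≤ divPowSum S y
  obtain ⟨σ, hσ⟩ := exists_perm_antitone x
  obtain ⟨τ, hτ⟩ := exists_perm_antitone y
  have hperm : ∀ p ∈ S, ∀ σ : Equiv.Perm (Fin n), p ∘ σ ∈ S :=
    fun p hp σ => hS p hp _ (majorizesNat_comp_perm p σ)
  have hsorted : Majorizes n (x ∘ σ) (y ∘ τ) := hxy.comp_perm σ τ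
  rw [← divPowSum_comp_perm hperm x σ, ← divPowSum_comp_perm hperm y τ]
  exact divPowSum_le_of_reflTransGen_robinHood
    (fun i j hij p hp q hpq hmax => hS p hp q (hpq.majorizesNat hij hmax))
    (reflTransGen_robinHood_of_sum_Iic_le hτ hsorted.1 (hsorted.sum_Iic_le hσ hτ))
    fun i => hx (σ i)

theorem stmt9 (n k : ℕ) (hn : 1 ≤ n) (hk : 1 ≤ k) (S : Finset (Fin n → ℕ))
    (hSk : ∀ p ∈ S, ∑ i, p i = k)
    (hSchur : ∀ p ∈ S, ∀ q : Fin n → ℕ, (∑ i, q i = k) → MajorizesNat n p q → q ∈ S)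
    (x y : Fin n → ℝ) (hx : ∀ i, 0 ≤ x i) (hy : ∀ i, 0 ≤ y i)
    (hxy : Majorizes n x y) :
    ∑ p ∈ S, ∏ i, x i ^ p i / (Nat.factorial (p i))
      ≤ ∑ p ∈ S, ∏ i, y i ^ p i / (Nat.factorial (p i)) := by
  exact stmt9_general (fun p hp q hpq => hSchur p hp q (hpq.1 ▸ hSk p hp) hpq) hx hxy
end

section
/- Let n ≥ 1 and k, r ≥ 1 be integers. The polynomial M_{k,r} is Schur-convex on [0,∞)^n: whenever x, y ∈ [0,∞)^n and x majorizes y, one has M_{k,r}(x) ≥ M_{k,r}(y). -/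
/-!
A linear functional `c` is largest on the rearrangements of `x` when `x` is sorted like `c`, and
Abel summation against the sorted `c` turns the majorization inequalities into
`∑ c i * y i ≤ ∑ c i * x (σ i)`. By Hahn–Banach, `y` then lies in the convex hull of the
rearrangements of `x` (Rado), so every convex symmetric function is at most as large at `y` as at
`x`. The function `x ↦ ∑_{|A| = r} φ (∑_{i ∈ A} x i)` is symmetric, and convex whenever `φ` is.
-/

open Finset MeasureTheory

/-- `M n k r x = ∑_{1 ≤ i₁ < ⋯ < i_r ≤ n} (x_{i₁} + ⋯ + x_{i_r})^k`. -/
noncomputable def M (n k r : ℕ) (x : Fin n → ℝ) : ℝ :=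
  ∑ A ∈ Finset.powersetCard r (Finset.univ : Finset (Fin n)), (∑ i ∈ A, x i) ^ k

theorem mul_sum_le_sum_mul_of_antitoneOn {ι R : Type*} [LinearOrder ι] [Semiring R]
    [PartialOrder R] [IsOrderedRing R] {c w : ι → R} {s : Finset ι} (hc : AntitoneOn c s)
    (hw : ∀ i ∈ s, 0 ≤ ∑ j ∈ s with j ≤ i, w j) {a : R} (ha : ∀ i ∈ s, a ≤ c i) :
    a * ∑ i ∈ s, w i ≤ ∑ i ∈ s, c i * w i := by
  induction s using Finset.induction_on_max generalizing a with
  | empty => simp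
  | insert m s hm ih =>
    have hms : m ∉ s := fun h ↦ (hm m h).false
    have hprefix (i) (hi : i ∈ s) : {j ∈ insert m s | j ≤ i} = {j ∈ s | j ≤ i} := by
      rw [filter_insert, if_neg (hm i hi).not_ge]
    have hsum : 0 ≤ ∑ i ∈ insert m s, w i := by
      have hall : {j ∈ insert m s | j ≤ m} = insert m s :=
        filter_true_of_mem (by simpa using fun j hj ↦ (hm j hj).le)
      simpa only [hall] using hw m (mem_insert_self m s)
    have hle : c m * ∑ i ∈ s, w i ≤ ∑ i ∈ s, c i * w i :=
      ih (hc.mono (by simp)) (fun i hi ↦ hprefix i hi ▸ hw i (mem_insert_of_mem hi))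
        fun i hi ↦ hc (by simp [hi]) (by simp) (hm i hi).le
    calc a * ∑ i ∈ insert m s, w i
        ≤ c m * ∑ i ∈ insert m s, w i :=
          mul_le_mul_of_nonneg_right (ha m (mem_insert_self m s)) hsum
      _ = c m * w m + c m * ∑ i ∈ s, w i := by rw [sum_insert hms, mul_add]
      _ ≤ c m * w m + ∑ i ∈ s, c i * w i := by gcongr
      _ = ∑ i ∈ insert m s, c i * w i := by rw [sum_insert hms]

theorem sum_le_sum_of_card_eq_of_forall_le {ι N : Type*} [AddCommMonoid N] [PartialOrder N]
    [IsOrderedAddMonoid N] {f : ι → N} {s t : Finset ι} (hcard : #s = #t)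
    (hf : ∀ a ∈ s, ∀ b ∈ t, f a ≤ f b) : ∑ i ∈ s, f i ≤ ∑ i ∈ t, f i := by
  rw [← sum_coe_sort s, ← sum_coe_sort t, ← (equivOfCardEq hcard).sum_comp]
  exact sum_le_sum fun a _ ↦ hf a a.2 _ (Subtype.prop _)

theorem sum_le_sum_of_isLowerSet_of_card_eq {ι N : Type*} [LinearOrder ι] [AddCommMonoid N]
    [PartialOrder N] [IsOrderedCancelAddMonoid N] {f : ι → N} (hf : Antitone f) {s t : Finset ι}
    (ht : IsLowerSet (t : Set ι)) (hcard : #s = #t) : ∑ i ∈ s, f i ≤ ∑ i ∈ t, f i := by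
  rw [← sum_sdiff_le_sum_sdiff]
  refine sum_le_sum_of_card_eq_of_forall_le (card_sdiff_comm hcard) fun a ha b hb ↦ hf ?_
  rw [mem_sdiff] at ha hb
  exact le_of_not_ge fun hab ↦ ha.2 (ht hab hb.1)

theorem exists_perm_antitone_comp {n : ℕ} {α : Type*} [LinearOrder α] (f : Fin n → α) :
    ∃ σ : Equiv.Perm (Fin n), Antitone (f ∘ σ) :=
  ⟨_, Tuple.monotone_sort (OrderDual.toDual ∘ f)⟩

theorem sum_le_sMax {n : ℕ} (x : Fin n → ℝ) (A : Finset (Fin n)) :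
    ∑ i ∈ A, x i ≤ sMax n #A x := by
  refine le_csSup (Set.Finite.bddAbove ?_) ⟨A, rfl, rfl⟩
  refine (Set.finite_range fun B : Finset (Fin n) ↦ ∑ i ∈ B, x i).subset ?_
  rintro _ ⟨B, -, rfl⟩
  exact Set.mem_range_self B

theorem sMax_le_sum_of_isLowerSet {n : ℕ} {x : Fin n → ℝ} {ρ : Equiv.Perm (Fin n)}
    (hρ : Antitone (x ∘ ρ)) {B : Finset (Fin n)} (hB : IsLowerSet (B : Set (Fin n))) :
    sMax n #B x ≤ ∑ i ∈ B, x (ρ i) := by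
  refine csSup_le ⟨_, B, rfl, rfl⟩ ?_
  rintro _ ⟨A, hA, rfl⟩
  simpa using sum_le_sum_of_isLowerSet_of_card_eq hρ hB
    (s := A.map ρ.symm.toEmbedding) (by rw [card_map, hA])

theorem sum_powersetCard_comp_perm {ι α N : Type*} [Fintype ι] [AddCommMonoid α]
    [AddCommMonoid N] (r : ℕ) (φ : α → N) (x : ι → α) (σ : Equiv.Perm ι) :
    ∑ A ∈ powersetCard r univ, φ (∑ i ∈ A, x (σ i)) =
      ∑ A ∈ powersetCard r univ, φ (∑ i ∈ A, x i) := by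
  conv_rhs => rw [← map_univ_equiv σ, powersetCard_map, sum_map]
  simp [mapEmbedding_apply]

theorem convexOn_sum_comp_sum {ι 𝕜 E β : Type*} [Semiring 𝕜] [PartialOrder 𝕜]
    [AddCommMonoid E] [Module 𝕜 E] [AddCommMonoid β] [PartialOrder β] [IsOrderedAddMonoid β]
    [Module 𝕜 β] {s : Set E} {φ : E → β} (hφ : ConvexOn 𝕜 s φ) (F : Finset (Finset ι)) :
    ConvexOn 𝕜 {z : ι → E | ∀ A ∈ F, ∑ i ∈ A, z i ∈ s} fun z ↦ ∑ A ∈ F, φ (∑ i ∈ A, z i) := by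
  have hlin (a b : 𝕜) (u v : ι → E) (A : Finset ι) :
      ∑ i ∈ A, (a • u + b • v) i = a • ∑ i ∈ A, u i + b • ∑ i ∈ A, v i := by
    simp only [Pi.add_apply, Pi.smul_apply, sum_add_distrib, smul_sum]
  refine ⟨fun u hu v hv a b ha hb hab A hA ↦ ?_, fun u hu v hv a b ha hb hab ↦ ?_⟩
  · rw [hlin]
    exact hφ.1 (hu A hA) (hv A hA) ha hb hab
  · rw [smul_sum, smul_sum, ← sum_add_distrib]
    simp only [hlin]
    exact sum_le_sum fun A hA ↦ hφ.2 (hu A hA) (hv A hA) ha hb hab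

namespace Majorizes

variable {n : ℕ} {x y : Fin n → ℝ}

theorem sum_Iic_le_s12 (h : Majorizes n x y) {ρ : Equiv.Perm (Fin n)} (hρ : Antitone (x ∘ ρ))
    (τ : Equiv.Perm (Fin n)) (j : Fin n) :
    ∑ i ∈ Iic j, y (τ i) ≤ ∑ i ∈ Iic j, x (ρ i) := by
  rcases lt_or_ge (j + 1 : ℕ) n with hj | hj
  · calc ∑ i ∈ Iic j, y (τ i)
        = ∑ i ∈ (Iic j).map τ.toEmbedding, y i := by simp
      _ ≤ sMax n #(Iic j) y := by
        simpa only [card_map] using sum_le_sMax y ((Iic j).map τ.toEmbedding)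
      _ ≤ sMax n #(Iic j) x := by
        rw [Fin.card_Iic]
        exact h.2 _ (by lia) (by lia)
      _ ≤ ∑ i ∈ Iic j, x (ρ i) :=
        sMax_le_sum_of_isLowerSet hρ (by simpa only [coe_Iic] using isLowerSet_Iic j)
  · have hall : Iic j = univ := by
      ext i
      simp only [mem_Iic, mem_univ, iff_true, Fin.le_def]
      lia
    rw [hall, Equiv.sum_comp τ y, Equiv.sum_comp ρ x, h.1]

theorem exists_perm_sum_mul_le (h : Majorizes n x y) (c : Fin n → ℝ) :
    ∃ σ : Equiv.Perm (Fin n), ∑ i, c i * y i ≤ ∑ i, c i * x (σ i) := by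
  obtain ⟨τ, hτ⟩ := exists_perm_antitone_comp c
  obtain ⟨ρ, hρ⟩ := exists_perm_antitone_comp x
  obtain ⟨a, ha⟩ := (Set.finite_range (c ∘ τ)).bddBelow
  refine ⟨τ.symm.trans ρ, sub_nonneg.mp ?_⟩
  have htotal : ∑ i, (x (ρ i) - y (τ i)) = 0 := by
    rw [sum_sub_distrib, Equiv.sum_comp ρ x, Equiv.sum_comp τ y, h.1, sub_self]
  have hprefix (j : Fin n) : 0 ≤ ∑ i with i ≤ j, (x (ρ i) - y (τ i)) := by
    rw [filter_ge_eq_Iic, sum_sub_distrib, sub_nonneg]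
    exact h.sum_Iic_le_s12 hρ τ j
  calc 0 = a * ∑ i, (x (ρ i) - y (τ i)) := by rw [htotal, mul_zero]
    _ ≤ ∑ i, c (τ i) * (x (ρ i) - y (τ i)) :=
      mul_sum_le_sum_mul_of_antitoneOn (hτ.antitoneOn _) (fun j _ ↦ hprefix j)
        fun i _ ↦ ha (Set.mem_range_self i)
    _ = ∑ i, c i * x (τ.symm.trans ρ i) - ∑ i, c i * y i := by
      rw [← Equiv.sum_comp τ fun i ↦ c i * y i, ← Equiv.sum_comp τ fun i ↦ c i * x _]
      simp [mul_sub]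

theorem mem_convexHull (h : Majorizes n x y) :
    y ∈ convexHull ℝ (Set.range fun σ : Equiv.Perm (Fin n) ↦ x ∘ σ) := by
  by_contra hy
  obtain ⟨f, u, hlt, hgt⟩ := geometric_hahn_banach_closed_point (convex_convexHull ℝ _)
    ((Set.finite_range _).isClosed_convexHull ℝ) hy
  have hf (z : Fin n → ℝ) : f z = ∑ i, f (Pi.single i 1) * z i := by
    conv_lhs => rw [pi_eq_sum_univ' z, map_sum]
    simp [mul_comm]
  obtain ⟨σ, hσ⟩ := h.exists_perm_sum_mul_le fun i ↦ f (Pi.single i 1)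
  have hxσ : f (x ∘ σ) < u := hlt _ (subset_convexHull ℝ _ (Set.mem_range_self σ))
  have hle : f y ≤ f (x ∘ σ) := by
    rw [hf y, hf (x ∘ σ)]
    exact hσ
  exact (hgt.trans_le hle).not_gt hxσ

theorem le_of_convexOn (h : Majorizes n x y) {C : Set (Fin n → ℝ)} {f : (Fin n → ℝ) → ℝ}
    (hf : ConvexOn ℝ C f) (hC : ∀ σ : Equiv.Perm (Fin n), x ∘ σ ∈ C)
    (hsymm : ∀ σ : Equiv.Perm (Fin n), f (x ∘ σ) = f x) : f y ≤ f x := by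
  obtain ⟨_, ⟨σ, rfl⟩, hσ⟩ :=
    hf.exists_ge_of_mem_convexHull (Set.range_subset_iff.mpr hC) h.mem_convexHull
  exact hσ.trans_eq (hsymm σ)

end Majorizes

theorem stmt12_general {n : ℕ} (r : ℕ) {s : Set ℝ} {φ : ℝ → ℝ} (hφ : ConvexOn ℝ s φ)
    {x y : Fin n → ℝ} (hx : ∀ A : Finset (Fin n), #A = r → ∑ i ∈ A, x i ∈ s)
    (hxy : Majorizes n x y) :
    ∑ A ∈ powersetCard r univ, φ (∑ i ∈ A, y i) ≤
      ∑ A ∈ powersetCard r univ, φ (∑ i ∈ A, x i) := by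
  refine hxy.le_of_convexOn (convexOn_sum_comp_sum hφ (powersetCard r univ)) (fun σ A hA ↦ ?_)
    (sum_powersetCard_comp_perm r φ x)
  simpa using hx (A.map σ.toEmbedding) (by rw [card_map, (mem_powersetCard.mp hA).2])

theorem stmt12 (n k r : ℕ) (hn : 1 ≤ n) (hk : 1 ≤ k) (hr : 1 ≤ r)
    (x y : Fin n → ℝ) (hx : ∀ i, 0 ≤ x i) (hy : ∀ i, 0 ≤ y i)
    (hxy : Majorizes n x y) :
    M n k r y ≤ M n k r x :=
  stmt12_general r (convexOn_pow k) (fun _ _ ↦ sum_nonneg fun i _ ↦ hx i) hxy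
end

section
/- Let n ≥ 1 and let x, y ∈ [0,∞)^n with ∑_{i=1}^n x_i = ∑_{i=1}^n y_i. If M_{k,r}(x) ≥ M_{k,r}(y) for all integers k, r ≥ 1, then x majorizes y. -/
open Finset MeasureTheory

/-!
Since `M n 0 r` does not depend on the vector, the inequalities between the `M n k r` can be summed
against `c ^ k / k!` for `c ≥ 0`. This compares the sums of `exp (c * ∑ i ∈ A, x i)` and of
`exp (c * ∑ i ∈ A, y i)` over the `r`-element sets `A`. As `c → ∞`, the exponential growth rate of
each of these sums is the sum of the `r` largest entries of the vector.
-/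

section PowerSums

variable {ι κ : Type*} {s : Finset ι} {t : Finset κ} {f : ι → ℝ} {g : κ → ℝ}

theorem hasSum_sum_exp_mul (s : Finset ι) (f : ι → ℝ) (c : ℝ) :
    HasSum (fun k : ℕ ↦ c ^ k / k.factorial * ∑ i ∈ s, f i ^ k) (∑ i ∈ s, Real.exp (c * f i)) := by
  have h : HasSum (fun k : ℕ ↦ ∑ i ∈ s, (c * f i) ^ k / k.factorial)
      (∑ i ∈ s, Real.exp (c * f i)) := by
    rw [Real.exp_eq_exp_ℝ]
    exact hasSum_sum fun i _ ↦ NormedSpace.expSeries_div_hasSum_exp (c * f i)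
  simpa only [mul_pow, mul_div_right_comm, ← mul_sum] using h

theorem sum_exp_mul_le_sum_exp_mul_of_sum_pow_le
    (h : ∀ k : ℕ, ∑ i ∈ s, f i ^ k ≤ ∑ j ∈ t, g j ^ k) {c : ℝ} (hc : 0 ≤ c) :
    ∑ i ∈ s, Real.exp (c * f i) ≤ ∑ j ∈ t, Real.exp (c * g j) :=
  hasSum_le (fun k ↦ mul_le_mul_of_nonneg_left (h k) (by positivity))
    (hasSum_sum_exp_mul s f c) (hasSum_sum_exp_mul t g c)

theorem le_of_forall_exp_mul_le_mul_exp_mul {a b C : ℝ}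
    (h : ∀ c : ℝ, 0 ≤ c → Real.exp (c * a) ≤ C * Real.exp (c * b)) : a ≤ b := by
  by_contra! hlt
  have hC : 1 ≤ C := by simpa using h 0 le_rfl
  have hab : 0 < a - b := sub_pos.2 hlt
  set c := C / (a - b)
  have hca : c * a = C + c * b := by
    linarith [div_mul_cancel₀ C hab.ne', mul_sub c a b]
  have hexp : Real.exp C ≤ C := by
    have hle := h c (by positivity)
    rw [hca, Real.exp_add] at hle
    exact le_of_mul_le_mul_right hle (Real.exp_pos _)
  linarith [Real.add_one_le_exp C]

theorem le_of_sum_pow_le_of_forall_le {b : ℝ}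
    (h : ∀ k : ℕ, ∑ i ∈ s, f i ^ k ≤ ∑ j ∈ t, g j ^ k) (hb : ∀ j ∈ t, g j ≤ b)
    {i : ι} (hi : i ∈ s) : f i ≤ b := by
  refine le_of_forall_exp_mul_le_mul_exp_mul (C := t.card) fun c hc ↦ ?_
  calc
    Real.exp (c * f i) ≤ ∑ i ∈ s, Real.exp (c * f i) :=
      single_le_sum (f := fun i ↦ Real.exp (c * f i)) (fun i _ ↦ (Real.exp_pos _).le) hi
    _ ≤ ∑ j ∈ t, Real.exp (c * g j) := sum_exp_mul_le_sum_exp_mul_of_sum_pow_le h hc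
    _ ≤ ∑ _j ∈ t, Real.exp (c * b) := by
      gcongr with j hj
      exact hb j hj
    _ = t.card * Real.exp (c * b) := by rw [sum_const, nsmul_eq_mul]

end PowerSums

section PartialSums

variable {n m : ℕ}

theorem M_exponent_zero (n r : ℕ) (x : Fin n → ℝ) : M n 0 r x = n.choose r := by
  simp [M]

theorem sum_le_sMax_card (x : Fin n → ℝ) (A : Finset (Fin n)) :
    ∑ i ∈ A, x i ≤ sMax n A.card x := by
  have hfin : {s : ℝ | ∃ B : Finset (Fin n), B.card = A.card ∧ s = ∑ i ∈ B, x i}.Finite :=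
    (Set.finite_range fun B : Finset (Fin n) ↦ ∑ i ∈ B, x i).subset
      fun _ ⟨B, _, hB⟩ ↦ ⟨B, hB.symm⟩
  exact le_csSup hfin.bddAbove ⟨A, rfl, rfl⟩

theorem sMax_le {x : Fin n → ℝ} {b : ℝ} (hm : m ≤ n)
    (h : ∀ A : Finset (Fin n), A.card = m → ∑ i ∈ A, x i ≤ b) : sMax n m x ≤ b := by
  obtain ⟨A, -, hA⟩ := exists_subset_card_eq
    (s := (univ : Finset (Fin n))) (n := m) (by simpa using hm)
  refine csSup_le ⟨_, A, hA, rfl⟩ ?_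
  rintro _ ⟨B, hB, rfl⟩
  exact h B hB

theorem sMax_le_sMax_of_M_le {x y : Fin n → ℝ} (hm : m ≤ n)
    (h : ∀ k : ℕ, 1 ≤ k → M n k m y ≤ M n k m x) : sMax n m y ≤ sMax n m x := by
  have hpow (k : ℕ) : M n k m y ≤ M n k m x := by
    rcases k.eq_zero_or_pos with rfl | hk
    · rw [M_exponent_zero, M_exponent_zero]
    · exact h k hk
  have hbound (A) (hA : A ∈ powersetCard m (univ : Finset (Fin n))) :
      ∑ i ∈ A, x i ≤ sMax n m x :=
    (mem_powersetCard.1 hA).2 ▸ sum_le_sMax_card x A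
  exact sMax_le hm fun A hA ↦ le_of_sum_pow_le_of_forall_le hpow hbound
    (mem_powersetCard.2 ⟨A.subset_univ, hA⟩)

end PartialSums

theorem stmt14_general (n : ℕ) (x y : Fin n → ℝ) (hsum : ∑ i, x i = ∑ i, y i)
    (hM : ∀ k r : ℕ, 1 ≤ k → 1 ≤ r → M n k r y ≤ M n k r x) :
    Majorizes n x y :=
  ⟨hsum, fun m hm hmn ↦
    sMax_le_sMax_of_M_le (hmn.trans (n.sub_le 1)) fun k hk ↦ hM k m hk hm⟩

theorem stmt14 (n : ℕ) (hn : 1 ≤ n) (x y : Fin n → ℝ)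
    (hx : ∀ i, 0 ≤ x i) (hy : ∀ i, 0 ≤ y i)
    (hsum : ∑ i, x i = ∑ i, y i)
    (hM : ∀ k r : ℕ, 1 ≤ k → 1 ≤ r → M n k r y ≤ M n k r x) :
    Majorizes n x y :=
  stmt14_general n x y hsum hM
end

section
/- Let n ≥ 1 and let x, y ∈ [0,∞)^n with ∑_{i=1}^n x_i = ∑_{i=1}^n y_i. If G_{k,r}(x) ≤ G_{k,r}(y) for all integers k, r ≥ 1, then M_{k,r}(x) ≥ M_{k,r}(y) for all integers k, r ≥ 1. -/
open Finset MeasureTheory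

/-- `G n k r x`: the sum over all n-tuples p of nonnegative integers with `∑ i, p i = k`
and at least `r` nonzero entries, of `∏ i, x i ^ p i / (p i)!`. -/
noncomputable def G (n k r : ℕ) (x : Fin n → ℝ) : ℝ :=
  ∑ κ ∈ Finset.univ.filter (fun κ : Fin n → Fin (k + 1) =>
      (∑ i, (κ i : ℕ)) = k ∧ r ≤ (Finset.univ.filter fun i => (κ i : ℕ) ≠ 0).card),
    ∏ i, x i ^ (κ i : ℕ) / (Nat.factorial (κ i : ℕ))

/-!
Expand each power in `M n k r x` by the multinomial theorem. A monomial of degree `k` involving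
exactly `d` of the variables survives in `(∑ i ∈ A, x i) ^ k` precisely when `A` contains those
variables, which happens for `(n - d).choose (n - r)` of the `r`-subsets `A`. Since this
multiplicity decreases with `d`, summation by parts over `d` writes `M n k r x` as
`n.choose r * (∑ i, x i) ^ k` minus a combination of the `G n k j x`, `j ≥ 1`, with nonnegative
coefficients.
-/

section DividedMonomial

variable {ι K : Type*} [Fintype ι]

/-- The set of indices `i` with `p i ≠ 0`, i.e. the variables occurring in the monomial with
exponent vector `p`. It is a `Finset`, unlike `Function.support`, so that it can be counted. -/
def expSupport (p : ι → ℕ) : Finset ι := {i | p i ≠ 0}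

/-- The monomial `∏ i, x i ^ p i / (p i)!` with exponent vector `p`, normalized so that the
multinomial theorem for it has the single coefficient `k!`. -/
def dividedMonomial [Semifield K] (x : ι → K) (p : ι → ℕ) : K :=
  ∏ i, x i ^ p i / (p i).factorial

lemma expSupport_subset_iff {p : ι → ℕ} {A : Finset ι} :
    expSupport p ⊆ A ↔ ∀ i, p i ≠ 0 → i ∈ A := by
  simp only [expSupport, subset_iff, mem_filter_univ]

lemma piAntidiag_eq_filter_expSupport_subset [DecidableEq ι] (A : Finset ι) (k : ℕ) :
    piAntidiag A k = {p ∈ piAntidiag (univ : Finset ι) k | expSupport p ⊆ A} := by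
  ext p
  simp only [mem_filter, mem_piAntidiag, expSupport_subset_iff, mem_univ, implies_true, and_true]
  refine and_congr_left fun hp => ?_
  rw [sum_subset (subset_univ A) fun i _ hi => not_not.mp (mt (hp i) hi)]

lemma multinomial_mul_prod_pow_eq_factorial_mul_dividedMonomial [Semifield K] [CharZero K]
    (x : ι → K) {p : ι → ℕ} {A : Finset ι} (hp : expSupport p ⊆ A) :
    (Nat.multinomial A p : K) * ∏ i ∈ A, x i ^ p i =
      (∑ i ∈ A, p i).factorial * dividedMonomial x p := by
  have hmonomial : dividedMonomial x p = ∏ i ∈ A, x i ^ p i / (p i).factorial := by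
    refine (prod_subset (subset_univ A) fun i _ hi => ?_).symm
    simp [not_not.mp (mt (expSupport_subset_iff.mp hp i) hi)]
  have hfactorial : ∏ i ∈ A, ((p i).factorial : K) ≠ 0 :=
    prod_ne_zero_iff.mpr fun i _ => Nat.cast_ne_zero.mpr (p i).factorial_ne_zero
  rw [hmonomial, prod_div_distrib, ← Nat.multinomial_spec A p]
  push_cast
  field_simp

lemma sum_pow_eq_factorial_mul_sum_dividedMonomial [DecidableEq ι] [Semifield K] [CharZero K]
    (x : ι → K) (A : Finset ι) (k : ℕ) :
    (∑ i ∈ A, x i) ^ k =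
      k.factorial * ∑ p ∈ piAntidiag univ k with expSupport p ⊆ A, dividedMonomial x p := by
  rw [sum_pow_eq_sum_piAntidiag, ← piAntidiag_eq_filter_expSupport_subset, mul_sum]
  refine sum_congr rfl fun p hp => ?_
  obtain ⟨hdegree, hsupport⟩ := mem_piAntidiag.mp hp
  rw [multinomial_mul_prod_pow_eq_factorial_mul_dividedMonomial x
    (expSupport_subset_iff.mpr hsupport), hdegree]

end DividedMonomial

lemma card_filter_powersetCard_subset_eq_choose_sub {α : Type*} [DecidableEq α] {S t : Finset α}
    (hS : S ⊆ t) {r : ℕ} (hr : r ≤ #t) :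
    #{A ∈ powersetCard r t | S ⊆ A} = (#t - #S).choose (#t - r) := by
  have hcard : #S ≤ #t := card_le_card hS
  rcases le_or_gt #S r with hSr | hSr
  · rw [card_filter_powersetCard_subset S t r hS hSr, ← Nat.choose_symm (by omega)]
    congr 1
    omega
  · rw [Nat.choose_eq_zero_of_lt (by omega), card_eq_zero, filter_eq_empty_iff]
    intro A hA hSA
    exact hSr.not_ge ((mem_powersetCard.mp hA).2 ▸ card_le_card hSA)

lemma eq_sub_sum_range_ite {R : Type*} [AddCommGroup R] (c : ℕ → R) {d n : ℕ} (hd : d ≤ n) :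
    c d = c 0 - ∑ j ∈ range n, if j + 1 ≤ d then c j - c (j + 1) else 0 := by
  have hrange : {j ∈ range n | j + 1 ≤ d} = range d := by
    ext j
    simp only [mem_filter, mem_range]
    omega
  rw [← sum_filter, hrange, sum_range_sub', sub_sub_cancel]

lemma sum_comp_mul_eq_sub_sum_tail {α R : Type*} [Ring R] (s : Finset α) (d : α → ℕ) {n : ℕ}
    (hd : ∀ a ∈ s, d a ≤ n) (c : ℕ → R) (w : α → R) :
    ∑ a ∈ s, c (d a) * w a =
      c 0 * ∑ a ∈ s, w a -
        ∑ j ∈ range n, (c j - c (j + 1)) * ∑ a ∈ s with j + 1 ≤ d a, w a := by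
  calc ∑ a ∈ s, c (d a) * w a
      = ∑ a ∈ s, (c 0 * w a -
          ∑ j ∈ range n, if j + 1 ≤ d a then (c j - c (j + 1)) * w a else 0) := by
        refine sum_congr rfl fun a ha => ?_
        rw [eq_sub_sum_range_ite c (hd a ha), sub_mul, sum_mul]
        simp only [ite_mul, zero_mul]
    _ = _ := by
        rw [sum_sub_distrib, ← mul_sum, sum_comm]
        simp only [← sum_filter, mul_sum]

section PowerSums

variable {n k r : ℕ} (x : Fin n → ℝ)

lemma G_eq_sum_dividedMonomial :
    G n k r x = ∑ p ∈ piAntidiag univ k with r ≤ #(expSupport p), dividedMonomial x p := by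
  refine sum_bij (fun κ _ i => (κ i : ℕ)) ?_ ?_ ?_ fun _ _ => rfl
  · intro κ hκ
    simpa [expSupport] using hκ
  · intro κ _ κ' _ h
    exact funext fun i => Fin.ext (congrFun h i)
  · intro p hp
    simp only [mem_filter, mem_piAntidiag] at hp
    obtain ⟨⟨hdegree, -⟩, hcard⟩ := hp
    have hlt (i : Fin n) : p i < k + 1 :=
      Nat.lt_succ_of_le (hdegree ▸ single_le_sum_of_canonicallyOrdered (mem_univ i))
    exact ⟨fun i => ⟨p i, hlt i⟩, mem_filter.mpr ⟨mem_univ _, hdegree, hcard⟩, rfl⟩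

lemma M_eq_factorial_mul_sum_choose_mul_dividedMonomial (hr : r ≤ n) :
    M n k r x = k.factorial * ∑ p ∈ piAntidiag univ k,
      ((n - #(expSupport p)).choose (n - r) : ℝ) * dividedMonomial x p := by
  calc M n k r x
      = k.factorial * ∑ A ∈ powersetCard r univ, ∑ p ∈ piAntidiag univ k,
          if expSupport p ⊆ A then dividedMonomial x p else 0 := by
        simp only [M, sum_pow_eq_factorial_mul_sum_dividedMonomial, sum_filter, mul_sum]
    _ = _ := by
        rw [sum_comm]
        refine congrArg _ (sum_congr rfl fun p _ => ?_)
        rw [← sum_filter, sum_const, nsmul_eq_mul,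
          card_filter_powersetCard_subset_eq_choose_sub (subset_univ _) (by simpa using hr),
          card_univ, Fintype.card_fin]

lemma M_eq_choose_mul_sum_pow_sub_sum_mul_G (hr : r ≤ n) :
    M n k r x = n.choose r * (∑ i, x i) ^ k -
      k.factorial * ∑ j ∈ range n,
        (((n - j).choose (n - r) : ℝ) - (n - (j + 1)).choose (n - r)) * G n k (j + 1) x := by
  have hcard : ∀ p ∈ piAntidiag (univ : Finset (Fin n)) k, #(expSupport p) ≤ n :=
    fun p _ => card_finset_fin_le _
  rw [M_eq_factorial_mul_sum_choose_mul_dividedMonomial x hr,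
    sum_comp_mul_eq_sub_sum_tail _ _ hcard fun d => ((n - d).choose (n - r) : ℝ),
    sum_pow_eq_factorial_mul_sum_dividedMonomial, Nat.sub_zero, Nat.choose_symm hr]
  simp only [G_eq_sum_dividedMonomial, subset_univ, filter_true]
  ring

lemma M_eq_zero_of_lt (hr : n < r) : M n k r x = 0 := by
  rw [M, powersetCard_eq_empty.mpr (by simpa using hr), sum_empty]

end PowerSums

theorem stmt15_general {n k : ℕ} {x y : Fin n → ℝ}
    (hsum : (∑ i, y i) ^ k ≤ (∑ i, x i) ^ k)
    (hG : ∀ r, 1 ≤ r → G n k r x ≤ G n k r y) (r : ℕ) : M n k r y ≤ M n k r x := by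
  rcases le_or_gt r n with hr | hr
  · have hcoeff (j : ℕ) :
        (0 : ℝ) ≤ (n - j).choose (n - r) - (n - (j + 1)).choose (n - r) :=
      sub_nonneg.mpr (Nat.cast_le.mpr (Nat.choose_le_choose _ (by omega)))
    rw [M_eq_choose_mul_sum_pow_sub_sum_mul_G x hr, M_eq_choose_mul_sum_pow_sub_sum_mul_G y hr]
    gcongr with j
    · exact hcoeff j
    · exact hG (j + 1) (by omega)
  · rw [M_eq_zero_of_lt x hr, M_eq_zero_of_lt y hr]

theorem stmt15 (n : ℕ) (hn : 1 ≤ n) (x y : Fin n → ℝ)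
    (hx : ∀ i, 0 ≤ x i) (hy : ∀ i, 0 ≤ y i)
    (hsum : ∑ i, x i = ∑ i, y i)
    (hG : ∀ k r : ℕ, 1 ≤ k → 1 ≤ r → G n k r x ≤ G n k r y) :
    ∀ k r : ℕ, 1 ≤ k → 1 ≤ r → M n k r y ≤ M n k r x := by
  intro k r hk _
  exact stmt15_general (by rw [hsum]) (fun j => hG k j hk) r
end

section
/- Let n ≥ 1, k ≥ 1, and 1 ≤ r ≤ n be integers, and let x ∈ [0,∞)^n. Then (1/k!)·M_{k,r}(x) = ∑_{j=2}^{r+1} C(n−j, r+1−j) · Ḡ_{k,j}(x), where C(a,b) denotes the binomial coefficient; explicitly, (1/k!)M_{k,r} = C(n−r−1,0)Ḡ_{k,r+1} + C(n−r,1)Ḡ_{k,r} + ⋯ + C(n−2,r−1)Ḡ_{k,2}. -/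
open Finset MeasureTheory

/-- `Ḡ n k r x = (x₁ + ⋯ + x_n)^k / k! − G n k r x`. -/
noncomputable def Gbar (n k r : ℕ) (x : Fin n → ℝ) : ℝ :=
  (∑ i, x i) ^ k / (Nat.factorial k) - G n k r x

/-!
Expanding every power by the multinomial theorem, both sides become combinations of the monomials
`∏ i, x i ^ p i / (p i)!` with `∑ i, p i = k`. If `p` has exactly `s` nonzero entries, then
`s ≥ 1`, and its coefficient on the left is the number of `r`-element sets containing the support
of `p`, that is `C(n - s, r - s)` if `s ≤ r` and `0` otherwise. On the right `p` occurs in `Ḡ_{k,j}`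
exactly for `j > s`, so its coefficient is `∑_{j = s + 1}^{r + 1} C(n - j, r + 1 - j)`, which is the
same number by the hockey-stick identity.
-/

open scoped Nat

-- The summand at `j = r + 1` is `1` also for `r = n`, where `n - j` is truncated to `0`.
theorem sum_Icc_choose_sub {n r s : ℕ} (hsr : s ≤ r) (hrn : r ≤ n) :
    ∑ j ∈ Icc (s + 1) (r + 1), (n - j).choose (r + 1 - j) = (n - s).choose (r - s) := by
  induction hsr using Nat.decreasingInduction with
  | self => simp
  | of_succ s hsr ih =>
    have pascal : (n - s).choose (r - s)
        = (n - (s + 1)).choose (r - (s + 1)) + (n - (s + 1)).choose (r - s) := by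
      rw [show n - s = n - (s + 1) + 1 by lia, show r - s = r - (s + 1) + 1 by lia,
        Nat.choose_succ_succ]
    rw [← add_sum_Ioc_eq_sum_Icc (by lia), ← Icc_add_one_left_eq_Ioc, ih, pascal,
      Nat.add_sub_add_right, add_comm]

section PiAntidiag

variable {ι : Type*} [DecidableEq ι]

theorem card_filter_powersetCard_subset_eq_sum {S t : Finset ι} {r : ℕ} (hS : S.Nonempty)
    (hSt : S ⊆ t) (hr : r ≤ #t) :
    #{A ∈ t.powersetCard r | S ⊆ A}
      = ∑ j ∈ Icc 2 (r + 1) with #S < j, (#t - j).choose (r + 1 - j) := by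
  have filter_eq : {j ∈ Icc 2 (r + 1) | #S < j} = Icc (#S + 1) (r + 1) := by
    have := hS.card_pos
    grind
  rw [filter_eq]
  rcases le_or_gt #S r with hSr | hrS
  · rw [card_filter_powersetCard_subset S t r hSt hSr, sum_Icc_choose_sub hSr hr]
  · rw [Icc_eq_empty (by lia), sum_empty, card_filter_eq_zero_iff]
    intro A hA hSA
    exact hrS.not_ge ((mem_powersetCard.mp hA).2 ▸ card_le_card hSA)

theorem mem_piAntidiag_iff_of_subset {s t : Finset ι} (hst : s ⊆ t) {k : ℕ} {p : ι → ℕ} :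
    p ∈ piAntidiag s k ↔ p ∈ piAntidiag t k ∧ {i ∈ t | p i ≠ 0} ⊆ s := by
  have sum_eq (h : ∀ i ∈ t, p i ≠ 0 → i ∈ s) : ∑ i ∈ s, p i = ∑ i ∈ t, p i :=
    sum_subset hst fun i hit his => by_contra fun hi => his (h i hit hi)
  simp only [mem_piAntidiag, subset_iff, mem_filter, and_imp]
  constructor
  · rintro ⟨hsum, hp⟩
    have support_subset (i : ι) (_ : i ∈ t) : p i ≠ 0 → i ∈ s := hp i
    exact ⟨⟨sum_eq support_subset ▸ hsum, fun i hi => hst (hp i hi)⟩, support_subset⟩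
  · rintro ⟨⟨hsum, hpt⟩, hp⟩
    exact ⟨(sum_eq @hp).trans hsum, fun i hi => hp (hpt i hi) hi⟩

theorem filter_ne_zero_nonempty_of_mem_piAntidiag {t : Finset ι} {k : ℕ} (hk : k ≠ 0)
    {p : ι → ℕ} (hp : p ∈ piAntidiag t k) : {i ∈ t | p i ≠ 0}.Nonempty := by
  obtain ⟨i, hi, hpi⟩ := exists_ne_zero_of_sum_ne_zero ((mem_piAntidiag.mp hp).1.trans_ne hk)
  exact ⟨i, mem_filter.mpr ⟨hi, hpi⟩⟩

theorem sum_powersetCard_sum_piAntidiag {E : Type*} [AddCommMonoid E] {t : Finset ι} {k r : ℕ}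
    (hk : k ≠ 0) (hr : r ≤ #t) (w : (ι → ℕ) → E) :
    ∑ A ∈ t.powersetCard r, ∑ p ∈ piAntidiag A k, w p
      = ∑ j ∈ Icc 2 (r + 1), (#t - j).choose (r + 1 - j) •
          ∑ p ∈ piAntidiag t k with #{i ∈ t | p i ≠ 0} < j, w p := by
  calc
    _ = ∑ p ∈ piAntidiag t k, ∑ A ∈ t.powersetCard r with {i ∈ t | p i ≠ 0} ⊆ A, w p := by
      refine sum_comm' fun A p => ?_
      rw [mem_filter, and_right_comm, and_assoc]
      exact and_congr_right fun hA => (mem_piAntidiag_iff_of_subset (mem_powersetCard.mp hA).1)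
    _ = ∑ p ∈ piAntidiag t k, ∑ j ∈ Icc 2 (r + 1) with #{i ∈ t | p i ≠ 0} < j,
          (#t - j).choose (r + 1 - j) • w p := by
      refine sum_congr rfl fun p hp => ?_
      rw [sum_const, ← sum_smul, card_filter_powersetCard_subset_eq_sum
        (filter_ne_zero_nonempty_of_mem_piAntidiag hk hp) (filter_subset _ _) hr]
    _ = _ := by
      simp only [smul_sum]
      exact sum_comm' fun p j => by simp only [mem_filter]; tauto

variable {K : Type*} [Field K] [CharZero K]

theorem sum_pow_div_factorial (s : Finset ι) (x : ι → K) (k : ℕ) :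
    (∑ i ∈ s, x i) ^ k / k ! = ∑ p ∈ piAntidiag s k, ∏ i ∈ s, x i ^ p i / (p i)! := by
  rw [sum_pow_eq_sum_piAntidiag, sum_div]
  refine sum_congr rfl fun p hp => ?_
  have factorial_eq : (∏ i ∈ s, ((p i)! : K)) * Nat.multinomial s p = k ! := by
    rw [← (mem_piAntidiag.mp hp).1]
    exact_mod_cast Nat.multinomial_spec s p
  have prod_ne_zero : ∏ i ∈ s, ((p i)! : K) ≠ 0 :=
    prod_ne_zero_iff.mpr fun i _ => Nat.cast_ne_zero.mpr (p i).factorial_ne_zero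
  have factorial_ne_zero : (k ! : K) ≠ 0 := Nat.cast_ne_zero.mpr k.factorial_ne_zero
  rw [prod_div_distrib, div_eq_div_iff factorial_ne_zero prod_ne_zero, ← factorial_eq]
  ring

theorem sum_pow_div_factorial_of_subset {s t : Finset ι} (hst : s ⊆ t) (x : ι → K) (k : ℕ) :
    (∑ i ∈ s, x i) ^ k / k ! = ∑ p ∈ piAntidiag s k, ∏ i ∈ t, x i ^ p i / (p i)! := by
  rw [sum_pow_div_factorial]
  refine sum_congr rfl fun p hp => prod_subset hst fun i _ his => ?_
  have hpi : p i = 0 := by_contra fun h => his ((mem_piAntidiag.mp hp).2 i h)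
  simp [hpi]

theorem stmt18_general {t : Finset ι} {k r : ℕ} (hk : k ≠ 0) (hr : r ≤ #t) (x : ι → K) :
    (∑ A ∈ t.powersetCard r, (∑ i ∈ A, x i) ^ k) / k !
      = ∑ j ∈ Icc 2 (r + 1), ((#t - j).choose (r + 1 - j) : K) *
          ((∑ i ∈ t, x i) ^ k / (k ! : K)
            - ∑ p ∈ piAntidiag t k with j ≤ #{i ∈ t | p i ≠ 0}, ∏ i ∈ t, x i ^ p i / (p i)!) := by
  have expand_left : (∑ A ∈ t.powersetCard r, (∑ i ∈ A, x i) ^ k) / (k ! : K)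
      = ∑ A ∈ t.powersetCard r, ∑ p ∈ piAntidiag A k, ∏ i ∈ t, x i ^ p i / (p i)! := by
    rw [sum_div]
    exact sum_congr rfl fun A hA =>
      sum_pow_div_factorial_of_subset (mem_powersetCard.mp hA).1 x k
  rw [expand_left, sum_powersetCard_sum_piAntidiag hk hr]
  refine sum_congr rfl fun j _ => ?_
  rw [nsmul_eq_mul, sum_pow_div_factorial, eq_comm]
  congr 1
  simp only [← not_le]
  exact sub_eq_of_eq_add' (sum_filter_add_sum_filter_not _ _ _).symm

end PiAntidiag

theorem G_eq_sum_piAntidiag (n k r : ℕ) (x : Fin n → ℝ) :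
    G n k r x
      = ∑ p ∈ piAntidiag univ k with r ≤ #{i | p i ≠ 0}, ∏ i, x i ^ p i / (p i)! := by
  refine sum_bij (fun κ _ i => (κ i : ℕ)) ?_ ?_ ?_ fun _ _ => rfl
  · simp
  · exact fun κ _ κ' _ h => funext fun i => Fin.ext (congrFun h i)
  · intro p hp
    have hsum : ∑ i, p i = k := (mem_piAntidiag.mp (mem_filter.mp hp).1).1
    have entry_le (i : Fin n) : p i ≤ k :=
      hsum ▸ single_le_sum (fun _ _ => Nat.zero_le _) (mem_univ i)
    exact ⟨fun i => ⟨p i, Nat.lt_succ_of_le (entry_le i)⟩, by simpa using hp, rfl⟩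

theorem stmt18 (n k r : ℕ) (hn : 1 ≤ n) (hk : 1 ≤ k) (hr : 1 ≤ r) (hrn : r ≤ n)
    (x : Fin n → ℝ) (hx : ∀ i, 0 ≤ x i) :
    M n k r x / (Nat.factorial k)
      = ∑ j ∈ Finset.Icc 2 (r + 1),
          (Nat.choose (n - j) (r + 1 - j) : ℝ) * Gbar n k j x := by
  simpa only [M, Gbar, G_eq_sum_piAntidiag, card_fin] using
    stmt18_general (Nat.one_le_iff_ne_zero.mp hk) (hrn.trans_eq (card_fin n).symm) x
end
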